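/- Let (X, W) be a left Frobenius pair in A. Then (X, Ŵ) is a cotorsion pair on the extension-closed subcategory Thick(X) = X̂ of A; in particular, Ŵ is closed under direct summands. -/

import Mathlib

/-!
The proof follows Auslander–Buchweitz approximation theory.

Dimension shifting gives `Extⁱ(X, Ŵ) = 0` for `i ≥ 1` (`ext_hat`). Both approximation sequences
of an object of `X̂` are built together, by induction on the length of an `X`-resolution: a
coresolution `0 → K → V → U → 0` of the first syzygy pushes out to a resolution
`0 → V → P → M → 0` with `P ∈ X`, and embedding `P` into an object of `W` gives a coresolution of
`M` (`hat_cores`, `hatAll_res`).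

For `X̂` to be thick, the substitute for projectivity is that any extension of an object of `X` by
an object of `Ŵ` splits. This shows that extensions of objects of `X` by objects of `X̂ₙ` stay
in `X̂ₙ` (`hat_extension`), hence gives closure under direct summands by a Schanuel-type comparison of syzygies
(`hat_biprod_left`), and closure of `X̂` under arbitrary extensions by a horseshoe argument
(`hatAll_extension`). The remaining two-out-of-three properties follow from these by pullback
along a resolution.

Finally `Ŵ` consists of the objects of `X̂` right orthogonal to `X` (`hatAllW_of_perp`), a
description that is visibly stable under direct summands.
-/

open CategoryTheory CategoryTheory.Limits CategoryTheory.Abelian ZeroObject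

universe w v u

namespace FrobeniusPaper

variable {C : Type u} [Category.{v} C] [Abelian C]

/-- `f, g` form a short exact sequence `0 → A → B → D → 0` in the abelian category `C`. -/
def IsSES {A B D : C} (f : A ⟶ B) (g : B ⟶ D) : Prop :=
  ∃ w : f ≫ g = 0, (ShortComplex.mk f g w).ShortExact

/-- A "subcategory" in the sense of the paper: a full additive subcategory, regarded as the
predicate of membership for its objects, closed under isomorphisms and direct summands. -/
structure IsSubcat (X : C → Prop) : Prop where
  zero : X 0
  iso_closed : ∀ {A B : C}, (A ≅ B) → X A → X B
  biprod_closed : ∀ {A B : C}, X A → X B → X (A ⊞ B)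
  summand_closed : ∀ {A M : C} (i : A ⟶ M) (p : M ⟶ A), i ≫ p = 𝟙 A → X M → X A

/-- `Hat X n M` means `M ∈ X̂ₙ`, i.e. there is an exact sequence
`0 → Xₙ → ⋯ → X₁ → X₀ → M → 0` with all `Xᵢ ∈ X`. -/
def Hat (X : C → Prop) : ℕ → C → Prop
  | 0, M => X M
  | (n + 1), M => ∃ (K E : C) (f : K ⟶ E) (g : E ⟶ M), IsSES f g ∧ X E ∧ Hat X n K

/-- `M ∈ X̂ = ⋃ₙ X̂ₙ`. -/
def HatAll (X : C → Prop) (M : C) : Prop := ∃ n, Hat X n M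

/-- `W` is a cogenerator for `X`. -/
def IsCogenerator (W X : C → Prop) : Prop :=
  (∀ M, W M → X M) ∧
    ∀ M, X M → ∃ (W₀ X' : C) (f : M ⟶ W₀) (g : W₀ ⟶ X'), IsSES f g ∧ W W₀ ∧ X X'

/-- `W` is a generator for `X`. -/
def IsGenerator (W X : C → Prop) : Prop :=
  (∀ M, W M → X M) ∧
    ∀ M, X M → ∃ (X' W₀ : C) (f : X' ⟶ W₀) (g : W₀ ⟶ M), IsSES f g ∧ W W₀ ∧ X X'

/-- `X` is closed under extensions. -/
def ExtClosed (X : C → Prop) : Prop :=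
  ∀ ⦃A B D : C⦄ (f : A ⟶ B) (g : B ⟶ D), IsSES f g → X A → X D → X B

/-- `X` is closed under kernels of epimorphisms. -/
def KerEpiClosed (X : C → Prop) : Prop :=
  ∀ ⦃A B D : C⦄ (f : A ⟶ B) (g : B ⟶ D), IsSES f g → X B → X D → X A

/-- A thick subcategory: closed under direct summands and two-out-of-three for
short exact sequences. -/
def IsThickSub (T : C → Prop) : Prop :=
  IsSubcat T ∧ ∀ ⦃A B D : C⦄ (f : A ⟶ B) (g : B ⟶ D), IsSES f g →
    (T A → T B → T D) ∧ (T A → T D → T B) ∧ (T B → T D → T A)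

/-- Membership in `Thick(X)`, the smallest thick subcategory containing `X`. -/
def thickClosure (X : C → Prop) (M : C) : Prop :=
  ∀ T : C → Prop, IsThickSub T → (∀ N, X N → T N) → T M

variable [HasExt.{w} C]

/-- `Y ∈ X^⊥`, i.e. `Extⁱ(M, Y) = 0` for all `i ≥ 1` and `M ∈ X`. -/
def rightPerp (X : C → Prop) (Y : C) : Prop :=
  ∀ M, X M → ∀ i : ℕ, 1 ≤ i → Subsingleton (Abelian.Ext M Y i)

/-- A left Frobenius pair `(X, W)`. -/
structure LeftFrobenius (X W : C → Prop) : Prop where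
  subX : IsSubcat X
  subW : IsSubcat W
  extClosed : ExtClosed X
  kerEpiClosed : KerEpiClosed X
  cogen : IsCogenerator W X
  perp : ∀ M, W M → rightPerp X M

/-- A strong left Frobenius pair `(X, W)`. -/
structure StrongLeftFrobenius (X W : C → Prop) extends LeftFrobenius X W : Prop where
  gen : IsGenerator W X
  proj : ∀ M N, W M → X N → ∀ i : ℕ, 1 ≤ i → Subsingleton (Abelian.Ext M N i)

/-- A cotorsion pair `(U, V)` on an extension-closed subcategory `B` of `C`. -/
structure CotorsionPairOn (B U V : C → Prop) : Prop where
  subU : ∀ M, U M → B M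
  subV : ∀ M, V M → B M
  isoU : ∀ {A B' : C}, (A ≅ B') → U A → U B'
  summandU : ∀ {A M : C} (i : A ⟶ M) (p : M ⟶ A), i ≫ p = 𝟙 A → U M → U A
  isoV : ∀ {A B' : C}, (A ≅ B') → V A → V B'
  summandV : ∀ {A M : C} (i : A ⟶ M) (p : M ⟶ A), i ≫ p = 𝟙 A → V M → V A
  ext1 : ∀ M N, U M → V N → Subsingleton (Abelian.Ext M N 1)
  res : ∀ M, B M → ∃ (V₀ U₀ : C) (f : V₀ ⟶ U₀) (g : U₀ ⟶ M), IsSES f g ∧ U U₀ ∧ V V₀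
  cores : ∀ M, B M → ∃ (V₀ U₀ : C) (f : M ⟶ V₀) (g : V₀ ⟶ U₀), IsSES f g ∧ U U₀ ∧ V V₀

/-! ### Short exact sequences -/

section SES

variable {C : Type u} [Category.{v} C] [Abelian C]

/-- A monomorphism `f` and an epimorphism `g` form a short exact sequence as soon as `f` is a
(weak) kernel of `g`. -/
lemma IsSES.of_lift {A B D : C} (f : A ⟶ B) (g : B ⟶ D) [Mono f] [Epi g] (w : f ≫ g = 0)
    (h : ∀ ⦃T : C⦄ (x : T ⟶ B), x ≫ g = 0 → ∃ y : T ⟶ A, y ≫ f = x) : IsSES f g := by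
  refine ⟨w, ?_⟩
  have : (ShortComplex.mk f g w).Exact := ShortComplex.exact_of_f_is_kernel _
    (KernelFork.IsLimit.ofι' f w fun x hx => ⟨(h x hx).choose, (h x hx).choose_spec⟩)
  exact ShortComplex.ShortExact.mk' this ‹_› ‹_›

lemma IsSES.of_desc {A B D : C} (f : A ⟶ B) (g : B ⟶ D) [Mono f] [Epi g] (w : f ≫ g = 0)
    (h : ∀ ⦃T : C⦄ (x : B ⟶ T), f ≫ x = 0 → ∃ y : D ⟶ T, g ≫ y = x) : IsSES f g := by
  refine ⟨w, ?_⟩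
  have : (ShortComplex.mk f g w).Exact := ShortComplex.exact_of_g_is_cokernel _
    (CokernelCofork.IsColimit.ofπ' g w fun x hx => ⟨(h x hx).choose, (h x hx).choose_spec⟩)
  exact ShortComplex.ShortExact.mk' this ‹_› ‹_›

lemma IsSES.mono {A B D : C} {f : A ⟶ B} {g : B ⟶ D} (h : IsSES f g) : Mono f :=
  h.choose_spec.mono_f

lemma IsSES.epi {A B D : C} {f : A ⟶ B} {g : B ⟶ D} (h : IsSES f g) : Epi g :=
  h.choose_spec.epi_g

lemma IsSES.zero {A B D : C} {f : A ⟶ B} {g : B ⟶ D} (h : IsSES f g) : f ≫ g = 0 :=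
  h.choose

lemma IsSES.lift {A B D : C} {f : A ⟶ B} {g : B ⟶ D} (h : IsSES f g) {T : C} (x : T ⟶ B)
    (hx : x ≫ g = 0) : ∃ y : T ⟶ A, y ≫ f = x := by
  have := h.mono
  exact ⟨_, (KernelFork.IsLimit.lift' h.choose_spec.fIsKernel x hx).2⟩

lemma IsSES.desc {A B D : C} {f : A ⟶ B} {g : B ⟶ D} (h : IsSES f g) {T : C} (x : B ⟶ T)
    (hx : f ≫ x = 0) : ∃ y : D ⟶ T, g ≫ y = x :=
  ⟨_, (CokernelCofork.IsColimit.desc' h.choose_spec.gIsCokernel x hx).2⟩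

lemma IsSES.kernel {B D : C} (g : B ⟶ D) [Epi g] : IsSES (kernel.ι g) g :=
  .of_lift _ _ (by simp) fun _ x hx => ⟨kernel.lift g x hx, by simp⟩

lemma IsSES.comp_iso {A B D D' : C} {f : A ⟶ B} {g : B ⟶ D} (h : IsSES f g) (e : D ≅ D') :
    IsSES f (g ≫ e.hom) := by
  have := h.mono
  have := h.epi
  refine .of_lift _ _ (by simp [reassoc_of% h.zero]) fun T x hx => h.lift x ?_
  rw [← cancel_mono e.hom, Category.assoc, hx, zero_comp]

lemma IsSES.biprod_left (A D : C) : IsSES (biprod.inl : A ⟶ A ⊞ D) biprod.snd :=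
  .of_lift _ _ (by simp) fun T x hx => ⟨x ≫ biprod.fst, by
    ext <;> simp [hx]⟩

lemma IsSES.zero_id (A : C) : IsSES (0 : (0 : C) ⟶ A) (𝟙 A) := by
  have : Mono (0 : (0 : C) ⟶ A) := ⟨fun _ _ _ => (isZero_zero C).eq_of_tgt _ _⟩
  exact .of_lift _ _ (by simp) fun T x hx => ⟨0, by simpa using hx.symm⟩

lemma IsSES.biprod {A B D A' B' D' : C} {f : A ⟶ B} {g : B ⟶ D} {f' : A' ⟶ B'} {g' : B' ⟶ D'}
    (h : IsSES f g) (h' : IsSES f' g') : IsSES (biprod.map f f') (biprod.map g g') := by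
  have := h.mono
  have := h'.mono
  have := h.epi
  have := h'.epi
  have : Mono (biprod.map f f') := inferInstance
  have : Epi (biprod.map g g') := inferInstance
  refine .of_lift _ _ (by ext <;> simp [h.zero, h'.zero]) fun T x hx => ?_
  have h1 : (x ≫ biprod.fst) ≫ g = 0 := by simpa using hx =≫ biprod.fst
  have h2 : (x ≫ biprod.snd) ≫ g' = 0 := by simpa using hx =≫ biprod.snd
  obtain ⟨y, hy⟩ := h.lift _ h1
  obtain ⟨y', hy'⟩ := h'.lift _ h2
  exact ⟨biprod.lift y y', by ext <;> simp [hy, hy']⟩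

lemma IsSES.biprod_id {A B D : C} {f : A ⟶ B} {g : B ⟶ D} (h : IsSES f g) (E : C) :
    IsSES (f ≫ biprod.inl) (biprod.map g (𝟙 E)) := by
  have := h.mono
  have := h.epi
  have : Mono (f ≫ (biprod.inl : B ⟶ B ⊞ E)) := mono_comp _ _
  have : Epi (biprod.map g (𝟙 E)) := inferInstance
  refine .of_lift _ _ (by simp [reassoc_of% h.zero]) fun T x hx => ?_
  have h1 : (x ≫ biprod.fst) ≫ g = 0 := by simpa using hx =≫ biprod.fst
  have h2 : x ≫ biprod.snd = 0 := by simpa using hx =≫ biprod.snd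
  obtain ⟨y, hy⟩ := h.lift _ h1
  exact ⟨y, by ext <;> simp [hy, h2]⟩

/-- The pullback of two epimorphisms `B ⟶ D` and `E ⟶ D`. -/
lemma IsSES.pullback {A B D K E : C} {i : A ⟶ B} {p : B ⟶ D} {k : K ⟶ E} {f : E ⟶ D}
    (h : IsSES i p) (h' : IsSES k f) :
    ∃ (P : C) (a : A ⟶ P) (b : P ⟶ E) (c : K ⟶ P) (d : P ⟶ B), IsSES a b ∧ IsSES c d := by
  have := h.mono
  have := h'.mono
  have := h.epi
  have := h'.epi
  let a : A ⟶ Limits.pullback p f := pullback.lift i 0 (by simp [h.zero])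
  let c : K ⟶ Limits.pullback p f := pullback.lift 0 k (by simp [h'.zero])
  have ha : a ≫ pullback.fst p f = i := pullback.lift_fst _ _ _
  have ha' : a ≫ pullback.snd p f = 0 := pullback.lift_snd _ _ _
  have hc : c ≫ pullback.fst p f = 0 := pullback.lift_fst _ _ _
  have hc' : c ≫ pullback.snd p f = k := pullback.lift_snd _ _ _
  have : Mono (a ≫ pullback.fst p f) := ha ▸ h.mono
  have : Mono (c ≫ pullback.snd p f) := hc' ▸ h'.mono
  have : Mono a := mono_of_mono a (pullback.fst p f)
  have : Mono c := mono_of_mono c (pullback.snd p f)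
  refine ⟨Limits.pullback p f, a, pullback.snd p f, c, pullback.fst p f,
    .of_lift _ _ ha' fun T x hx => ?_, .of_lift _ _ hc fun T x hx => ?_⟩
  · obtain ⟨y, hy⟩ := h.lift (x ≫ pullback.fst p f) (by simp [pullback.condition, reassoc_of% hx])
    exact ⟨y, by ext <;> simp [ha, ha', hy, hx]⟩
  · obtain ⟨y, hy⟩ := h'.lift (x ≫ pullback.snd p f)
      (by simp [← pullback.condition, reassoc_of% hx])
    exact ⟨y, by ext <;> simp [hc, hc', hy, hx]⟩

/-- The kernel of a composition `E ⟶ B ⟶ D` of epimorphisms. -/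
lemma IsSES.kernel_comp {K E B A D : C} {k : K ⟶ E} {f : E ⟶ B} {i : A ⟶ B} {p : B ⟶ D}
    (h : IsSES k f) (h' : IsSES i p) :
    ∃ (P : C) (a : K ⟶ P) (b : P ⟶ A) (c : P ⟶ E), IsSES a b ∧ IsSES c (f ≫ p) := by
  have := h.mono
  have := h'.mono
  have := h.epi
  have := h'.epi
  let a : K ⟶ Limits.pullback f i := pullback.lift k 0 (by simp [h.zero])
  have ha : a ≫ pullback.fst f i = k := pullback.lift_fst _ _ _
  have ha' : a ≫ pullback.snd f i = 0 := pullback.lift_snd _ _ _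
  have : Mono (a ≫ pullback.fst f i) := ha ▸ h.mono
  have : Mono a := mono_of_mono a (pullback.fst f i)
  have : Epi (f ≫ p) := epi_comp f p
  refine ⟨Limits.pullback f i, a, pullback.snd f i, pullback.fst f i,
    .of_lift _ _ ha' fun T x hx => ?_,
    .of_lift _ _ (by simp [pullback.condition_assoc, h'.zero]) fun T x hx => ?_⟩
  · obtain ⟨y, hy⟩ := h.lift (x ≫ pullback.fst f i) (by simp [pullback.condition, reassoc_of% hx])
    exact ⟨y, by ext <;> simp [ha, ha', hy, hx]⟩
  · obtain ⟨y, hy⟩ := h'.lift (x ≫ f) (by simpa using hx)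
    exact ⟨pullback.lift x y hy.symm, pullback.lift_fst _ _ _⟩

/-- The pushout of two monomorphisms `A ⟶ B` and `A ⟶ V`. -/
lemma IsSES.pushout {A B D V U : C} {i : A ⟶ B} {p : B ⟶ D} {j : A ⟶ V} {q : V ⟶ U}
    (h : IsSES i p) (h' : IsSES j q) :
    ∃ (P : C) (a : V ⟶ P) (b : P ⟶ D) (c : B ⟶ P) (d : P ⟶ U), IsSES a b ∧ IsSES c d := by
  have := h.mono
  have := h'.mono
  have := h.epi
  have := h'.epi
  let b : Limits.pushout i j ⟶ D := pushout.desc p 0 (by simp [h.zero])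
  let d : Limits.pushout i j ⟶ U := pushout.desc 0 q (by simp [h'.zero])
  have hb : pushout.inl i j ≫ b = p := pushout.inl_desc _ _ _
  have hb' : pushout.inr i j ≫ b = 0 := pushout.inr_desc _ _ _
  have hd : pushout.inl i j ≫ d = 0 := pushout.inl_desc _ _ _
  have hd' : pushout.inr i j ≫ d = q := pushout.inr_desc _ _ _
  have : Epi (pushout.inl i j ≫ b) := hb ▸ h.epi
  have : Epi (pushout.inr i j ≫ d) := hd' ▸ h'.epi
  have : Epi b := epi_of_epi (pushout.inl i j) b
  have : Epi d := epi_of_epi (pushout.inr i j) d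
  refine ⟨Limits.pushout i j, pushout.inr i j, b, pushout.inl i j, d,
    .of_desc _ _ hb' fun T x hx => ?_, .of_desc _ _ hd fun T x hx => ?_⟩
  · obtain ⟨y, hy⟩ := h.desc (pushout.inl i j ≫ x) (by simp [pushout.condition_assoc, hx])
    exact ⟨y, by ext <;> simp [reassoc_of% hb, reassoc_of% hb', hy, hx]⟩
  · obtain ⟨y, hy⟩ := h'.desc (pushout.inr i j ≫ x) (by simp [← pushout.condition_assoc, hx])
    exact ⟨y, by ext <;> simp [reassoc_of% hd, reassoc_of% hd', hy, hx]⟩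

/-- The cokernel of a composition `V ⟶ P ⟶ E` of monomorphisms. -/
lemma IsSES.cokernel_comp {V P M E U : C} {i : V ⟶ P} {p : P ⟶ M} {j : P ⟶ E} {q : E ⟶ U}
    (h : IsSES i p) (h' : IsSES j q) :
    ∃ (Q : C) (a : E ⟶ Q) (b : M ⟶ Q) (c : Q ⟶ U), IsSES (i ≫ j) a ∧ IsSES b c := by
  have := h.mono
  have := h'.mono
  have := h.epi
  have := h'.epi
  let c : Limits.pushout p j ⟶ U := pushout.desc 0 q (by simp [h'.zero])
  have hc : pushout.inl p j ≫ c = 0 := pushout.inl_desc _ _ _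
  have hc' : pushout.inr p j ≫ c = q := pushout.inr_desc _ _ _
  have : Epi (pushout.inr p j ≫ c) := hc' ▸ h'.epi
  have : Epi c := epi_of_epi (pushout.inr p j) c
  have : Mono (i ≫ j) := mono_comp i j
  refine ⟨Limits.pushout p j, pushout.inr p j, pushout.inl p j, c,
    .of_desc _ _ (by simp [← pushout.condition, reassoc_of% h.zero]) fun T x hx => ?_,
    .of_desc _ _ hc fun T x hx => ?_⟩
  · obtain ⟨y, hy⟩ := h.desc (j ≫ x) (by simpa using hx)
    exact ⟨pushout.desc y x hy, pushout.inr_desc _ _ _⟩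
  · obtain ⟨y, hy⟩ := h'.desc (pushout.inr p j ≫ x) (by simp [← pushout.condition_assoc, hx])
    exact ⟨y, by ext <;> simp [reassoc_of% hc, reassoc_of% hc', hy, hx]⟩

/-- A section of the epimorphism of a short exact sequence identifies the middle term with the
direct sum of the outer ones. -/
lemma IsSES.iso_biprod_of_section {A B D : C} {f : A ⟶ B} {g : B ⟶ D} (h : IsSES f g) (s : D ⟶ B)
    (hs : s ≫ g = 𝟙 D) : Nonempty (A ⊞ D ≅ B) := by
  have := h.mono
  have h1 : (𝟙 B - g ≫ s) ≫ g = 0 := by simp [hs]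
  obtain ⟨r, hr⟩ := h.lift _ h1
  have hfr : f ≫ r = 𝟙 A := by
    rw [← cancel_mono f]
    simp [hr, reassoc_of% h.zero]
  have hsr : s ≫ r = 0 := by
    rw [← cancel_mono f]
    simp [hr, reassoc_of% hs]
  exact ⟨⟨biprod.desc f s, biprod.lift r g, by ext <;> simp [hfr, hsr, hs, h.zero],
    by simp [hr]⟩⟩

end SES

/-- A short exact sequence `0 → A → B → D → 0` with `Ext¹(D, A) = 0` splits. -/
lemma IsSES.exists_section {A B D : C} {f : A ⟶ B} {g : B ⟶ D} (h : IsSES f g)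
    (hext : Subsingleton (Ext D A 1)) : ∃ s : D ⟶ B, s ≫ g = 𝟙 D := by
  obtain ⟨w, h⟩ := h
  obtain ⟨x, hx⟩ := Ext.covariant_sequence_exact₃ D h (Ext.mk₀ (𝟙 D)) (n₁ := 1) rfl
    (Subsingleton.elim _ _)
  obtain ⟨s, rfl⟩ := Ext.mk₀_bijective _ _ |>.2 x
  refine ⟨s, (Ext.mk₀_bijective _ _).1 ?_⟩
  simpa using hx

lemma IsSES.ext_subsingleton₃ {A B D : C} {f : A ⟶ B} {g : B ⟶ D} (h : IsSES f g) (M : C) (i : ℕ)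
    (hB : Subsingleton (Ext M B i)) (hA : Subsingleton (Ext M A (i + 1))) :
    Subsingleton (Ext M D i) := by
  obtain ⟨w, h⟩ := h
  refine subsingleton_of_forall_eq 0 fun x => ?_
  obtain ⟨y, rfl⟩ := Ext.covariant_sequence_exact₃ M h x (n₁ := i + 1) rfl (Subsingleton.elim _ _)
  rw [Subsingleton.elim y 0, Ext.zero_comp]

lemma IsSES.ext_subsingleton₂ {A B D : C} {f : A ⟶ B} {g : B ⟶ D} (h : IsSES f g) (M : C) (i : ℕ)
    (hA : Subsingleton (Ext M A i)) (hD : Subsingleton (Ext M D i)) :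
    Subsingleton (Ext M B i) := by
  obtain ⟨w, h⟩ := h
  refine subsingleton_of_forall_eq 0 fun x => ?_
  obtain ⟨y, rfl⟩ := Ext.covariant_sequence_exact₂ M h x (Subsingleton.elim _ _)
  rw [Subsingleton.elim y 0, Ext.zero_comp]

lemma ext_subsingleton_of_retract {A N : C} (i : A ⟶ N) (p : N ⟶ A) (hip : i ≫ p = 𝟙 A) (M : C)
    (n : ℕ) (hN : Subsingleton (Ext M N n)) : Subsingleton (Ext M A n) := by
  refine subsingleton_of_forall_eq 0 fun x => ?_
  have h : (x.comp (Ext.mk₀ i) (add_zero n)).comp (Ext.mk₀ p) (add_zero n) = x := by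
    rw [Ext.comp_assoc_of_third_deg_zero, Ext.mk₀_comp_mk₀, hip, Ext.comp_mk₀_id]
  rw [← h, Subsingleton.elim (x.comp (Ext.mk₀ i) (add_zero n)) 0, Ext.zero_comp]

/-! ### Resolution classes -/

section Hat

variable {C : Type u} [Category.{v} C] [Abelian C]

lemma Hat.iso {X : C → Prop} (hX : IsSubcat X) {n : ℕ} {A B : C} (e : A ≅ B) (h : Hat X n A) :
    Hat X n B := by
  cases n with
  | zero => exact hX.iso_closed e h
  | succ n =>
    obtain ⟨K, E, f, g, hs, hE, hK⟩ := h
    exact ⟨K, E, f, g ≫ e.hom, hs.comp_iso e, hE, hK⟩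

lemma Hat.mono {X Y : C → Prop} (hXY : ∀ M, X M → Y M) {n : ℕ} {A : C} (h : Hat X n A) :
    Hat Y n A := by
  induction n generalizing A with
  | zero => exact hXY _ h
  | succ n ih =>
    obtain ⟨K, E, f, g, hs, hE, hK⟩ := h
    exact ⟨K, E, f, g, hs, hXY _ hE, ih hK⟩

lemma Hat.biprod_right {X : C → Prop} (hX : IsSubcat X) {n : ℕ} {A E : C} (h : Hat X n A)
    (hE : X E) : Hat X n (A ⊞ E) := by
  cases n with
  | zero => exact hX.biprod_closed h hE
  | succ n =>
    obtain ⟨K, F, f, g, hs, hF, hK⟩ := h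
    exact ⟨K, F ⊞ E, _, _, hs.biprod_id E, hX.biprod_closed hF hE, hK⟩

end Hat

/-! ### Approximations and thickness for a left Frobenius pair -/

namespace LeftFrobenius

variable {X W : C → Prop}

/-- `Extⁱ(X, Ŵ) = 0` for all `i ≥ 1`, by dimension shifting along a `W`-resolution. -/
lemma ext_hat (hF : LeftFrobenius X W)
    {n : ℕ} {N : C} (hN : Hat W n N) : rightPerp X N := by
  induction n generalizing N with
  | zero => exact hF.perp N hN
  | succ n ih =>
    obtain ⟨K, E, f, g, hs, hE, hK⟩ := hN
    intro M hM i hi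
    exact hs.ext_subsingleton₃ M i (hF.perp E hE M hM i hi) (ih hK M hM (i + 1) (by omega))

lemma hat_of_hatW (hF : LeftFrobenius X W)
    {n : ℕ} {M : C} (h : Hat W n M) : Hat X n M := h.mono hF.cogen.1

/-- An object `M` of `X̂ₙ` embeds into an object of `Ŵₙ` with cokernel in `X`. -/
lemma hat_cores (hF : LeftFrobenius X W) {n : ℕ} {M : C} (hM : Hat X n M) :
    ∃ (V U : C) (f : M ⟶ V) (g : V ⟶ U), IsSES f g ∧ X U ∧ Hat W n V := by
  induction n generalizing M with
  | zero =>
    obtain ⟨W₀, X', f, g, hs, hW, hX⟩ := hF.cogen.2 M hM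
    exact ⟨W₀, X', f, g, hs, hX, hW⟩
  | succ n ih =>
    obtain ⟨K, E, f, g, hs, hE, hK⟩ := hM
    obtain ⟨V, U, j, q, hj, hU, hV⟩ := ih hK
    obtain ⟨P, a, b, c, d, hab, hcd⟩ := hs.pushout hj
    have hP : X P := hF.extClosed c d hcd hE hU
    obtain ⟨W₀, X', j', q', hj', hW, hX'⟩ := hF.cogen.2 P hP
    obtain ⟨Q, a', b', c', h1, h2⟩ := hab.cokernel_comp hj'
    exact ⟨Q, X', b', c', h2, hX', V, W₀, _, a', h1, hW, hV⟩

/-- An object of `X̂` is a quotient of an object of `X` by an object of `Ŵ`. -/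
lemma hatAll_res (hF : LeftFrobenius X W) {M : C} (hM : HatAll X M) :
    ∃ (V U : C) (f : V ⟶ U) (g : U ⟶ M), IsSES f g ∧ X U ∧ HatAll W V := by
  obtain ⟨n, hM⟩ := hM
  cases n with
  | zero => exact ⟨0, M, 0, 𝟙 M, IsSES.zero_id M, hM, 0, hF.subW.zero⟩
  | succ n =>
    obtain ⟨K, E, f, g, hs, hE, hK⟩ := hM
    obtain ⟨V, U, j, q, hj, hU, hV⟩ := hF.hat_cores hK
    obtain ⟨P, a, b, c, d, hab, hcd⟩ := hs.pushout hj
    exact ⟨V, P, a, b, hab, hF.extClosed c d hcd hE hU, n, hV⟩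

lemma hat_kernel (hF : LeftFrobenius X W)
    {n : ℕ} {A B D : C} {f : A ⟶ B} {g : B ⟶ D} (h : IsSES f g) (hB : Hat X n B)
    (hD : X D) : Hat X n A := by
  cases n with
  | zero => exact hF.kerEpiClosed f g h hB hD
  | succ n =>
    obtain ⟨K, E, k, e, hs, hE, hK⟩ := hB
    obtain ⟨P, a, b, c, hab, hc⟩ := hs.kernel_comp h
    exact ⟨K, P, a, b, hab, hF.kerEpiClosed _ _ hc hE hD, hK⟩

/-- An extension of an object of `X` by an object `A` of `X̂ₙ` lies in `X̂ₙ`: pushing out along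
`A ⟶ V` with `V ∈ Ŵₙ` makes the extension split. -/
lemma hat_extension (hF : LeftFrobenius X W)
    {n : ℕ} {A B D : C} {f : A ⟶ B} {g : B ⟶ D} (h : IsSES f g) (hA : Hat X n A)
    (hD : X D) : Hat X n B := by
  obtain ⟨V, U, j, q, hj, hU, hV⟩ := hF.hat_cores hA
  obtain ⟨P, a, b, c, d, hab, hcd⟩ := h.pushout hj
  obtain ⟨s, hs⟩ := hab.exists_section (hF.ext_hat hV D hD 1 le_rfl)
  obtain ⟨e⟩ := hab.iso_biprod_of_section s hs
  exact hF.hat_kernel hcd (((hF.hat_of_hatW hV).biprod_right hF.subX hD).iso hF.subX e) hU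

/-- `X̂ₙ` is closed under direct summands. The kernels of an epimorphism `E ⟶ A ⊞ B` and of the
direct sum `E ⊞ E ⟶ A ⊞ B` of its two components are compared through a
pullback, as in the lemma of Schanuel. -/
lemma hat_biprod_left (hF : LeftFrobenius X W)
    {n : ℕ} {A B : C} (h : Hat X n (A ⊞ B)) : Hat X n A := by
  induction n generalizing A B with
  | zero => exact hF.subX.summand_closed biprod.inl biprod.fst (by simp) h
  | succ n ih =>
    obtain ⟨K, E, f, g, hs, hE, hK⟩ := h
    have := hs.epi
    have hA := IsSES.kernel (g ≫ (biprod.fst : A ⊞ B ⟶ A))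
    have hB := IsSES.kernel (g ≫ (biprod.snd : A ⊞ B ⟶ B))
    obtain ⟨L, a, b, c, d, hab, hcd⟩ := hs.pullback (hA.biprod hB)
    have hL : Hat X n L := hF.hat_extension hab hK (hF.subX.biprod_closed hE hE)
    exact ⟨_, E, _, _, hA, hE, ih (hF.hat_kernel hcd hL hE)⟩

lemma hatAll_summand (hF : LeftFrobenius X W)
    {A M : C} (i : A ⟶ M) (p : M ⟶ A) (hip : i ≫ p = 𝟙 A) (h : HatAll X M) :
    HatAll X A := by
  obtain ⟨n, h⟩ := h
  have : IsSplitEpi p := ⟨⟨i, hip⟩⟩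
  obtain ⟨e⟩ := (IsSES.kernel p).iso_biprod_of_section i hip
  exact ⟨n, hF.hat_biprod_left (h.iso hF.subX (e.symm ≪≫ biprod.braiding _ _))⟩

/-- An extension of an object of `X̂` by an object of `Ŵ` lies in `X̂`. This is a horseshoe
argument, in which `Ext¹(X, Ŵ) = 0` provides the lifting that projectivity would. -/
lemma hatAll_extension_of_hatW (hF : LeftFrobenius X W)
    {n : ℕ} {V P D : C} {f : V ⟶ P} {g : P ⟶ D} (h : IsSES f g)
    (hV : Hat W n V) (hD : HatAll X D) : HatAll X P := by
  induction n generalizing V P D with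
  | zero =>
    obtain ⟨V', U, k, e, hk, hU, m, hV'⟩ := hF.hatAll_res hD
    obtain ⟨Q, a, b, c, d, hab, hcd⟩ := h.pullback hk
    exact ⟨m + 1, V', Q, c, d, hcd, hF.extClosed a b hab (hF.cogen.1 V hV) hU, hF.hat_of_hatW hV'⟩
  | succ n ih =>
    have hV₀ := hV
    obtain ⟨V₁, W₁, k₁, e₁, hk₁, hW₁, hV₁⟩ := hV
    obtain ⟨V', U, k, e, hk, hU, m, hV'⟩ := hF.hatAll_res hD
    obtain ⟨Q, a, b, c, d, hab, hcd⟩ := h.pullback hk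
    obtain ⟨s, hs⟩ := hab.exists_section (hF.ext_hat hV₀ U hU 1 le_rfl)
    obtain ⟨ι⟩ := hab.iso_biprod_of_section s hs
    obtain ⟨R, a', b', c', hR, hR'⟩ :=
      ((hk₁.biprod_id U).comp_iso ι).kernel_comp hcd
    obtain ⟨m', hRX⟩ := ih hR hV₁ ⟨m, hF.hat_of_hatW hV'⟩
    exact ⟨m' + 1, R, _, c', _, hR', hF.subX.biprod_closed (hF.cogen.1 _ hW₁) hU, hRX⟩

lemma hatAll_extension (hF : LeftFrobenius X W)
    {A B D : C} {f : A ⟶ B} {g : B ⟶ D} (h : IsSES f g)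
    (hA : HatAll X A) (hD : HatAll X D) : HatAll X B := by
  obtain ⟨n, hA⟩ := hA
  obtain ⟨V, U, j, q, hj, hU, hV⟩ := hF.hat_cores hA
  obtain ⟨P, a, b, c, d, hab, hcd⟩ := h.pushout hj
  obtain ⟨m, hP⟩ := hF.hatAll_extension_of_hatW hab hV hD
  exact ⟨m, hF.hat_kernel hcd hP hU⟩

lemma isThickSub_hatAll (hF : LeftFrobenius X W) : IsThickSub (HatAll X) := by
  refine ⟨⟨⟨0, hF.subX.zero⟩, fun e ⟨n, h⟩ => ⟨n, h.iso hF.subX e⟩,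
    fun {A B} hA hB => hF.hatAll_extension (IsSES.biprod_left A B) hA hB,
    fun i p hip h => hF.hatAll_summand i p hip h⟩, fun A B D f g h =>
    ⟨fun hA hB => ?_, fun hA hD => hF.hatAll_extension h hA hD, fun hB hD => ?_⟩⟩
  · obtain ⟨V, U, k, e, hk, hU, m, hV⟩ := hF.hatAll_res hB
    obtain ⟨P, a, b, c, hab, hc⟩ := hk.kernel_comp h
    obtain ⟨l, hP⟩ := hF.hatAll_extension hab ⟨m, hF.hat_of_hatW hV⟩ hA
    exact ⟨l + 1, P, U, c, _, hc, hU, hP⟩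
  · obtain ⟨V, U, k, e, hk, hU, m, hV⟩ := hF.hatAll_res hD
    obtain ⟨P, a, b, c, d, hab, hcd⟩ := h.pullback hk
    obtain ⟨l, hP⟩ := hF.hatAll_extension hcd ⟨m, hF.hat_of_hatW hV⟩ hB
    exact ⟨l, hF.hat_kernel hab hP hU⟩

/-- An object of `X̂` right orthogonal to `X` lies in `Ŵ`: in a sequence `0 → V → U → M → 0` with
`V ∈ Ŵ` and `U ∈ X`, the object `U` is orthogonal to `X` as well, hence a summand of an object
of `W`. -/
lemma hatAllW_of_perp (hF : LeftFrobenius X W) {M : C} (hM : HatAll X M)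
    (hperp : ∀ N, X N → Subsingleton (Ext N M 1)) : HatAll W M := by
  obtain ⟨V, U, k, e, hk, hU, m, hV⟩ := hF.hatAll_res hM
  obtain ⟨W₀, X', f, g, hs, hW, hX'⟩ := hF.cogen.2 U hU
  obtain ⟨s, hsg⟩ := hs.exists_section
    (hk.ext_subsingleton₂ X' 1 (hF.ext_hat hV X' hX' 1 le_rfl) (hperp X' hX'))
  obtain ⟨ι⟩ := hs.iso_biprod_of_section s hsg
  have hUW : W U := hF.subW.summand_closed biprod.inl biprod.fst (by simp)
    (hF.subW.iso_closed ι.symm hW)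
  exact ⟨m + 1, V, U, k, e, hk, hUW, hV⟩

lemma cotorsionPairOn (hF : LeftFrobenius X W) : CotorsionPairOn (HatAll X) X (HatAll W) where
  subU M hM := ⟨0, hM⟩
  subV M := fun ⟨n, hM⟩ => ⟨n, hF.hat_of_hatW hM⟩
  isoU := hF.subX.iso_closed
  summandU := hF.subX.summand_closed
  isoV := fun e ⟨n, h⟩ => ⟨n, h.iso hF.subW e⟩
  summandV := fun i p hip ⟨n, h⟩ =>
    hF.hatAllW_of_perp (hF.hatAll_summand i p hip ⟨n, hF.hat_of_hatW h⟩) fun N hN =>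
      ext_subsingleton_of_retract i p hip N 1 (hF.ext_hat h N hN 1 le_rfl)
  ext1 M N hM := fun ⟨_, hN⟩ => hF.ext_hat hN M hM 1 le_rfl
  res M hM := by
    obtain ⟨V, U, f, g, h⟩ := hF.hatAll_res hM
    exact ⟨V, U, f, g, h⟩
  cores M := fun ⟨n, hM⟩ => by
    obtain ⟨V, U, f, g, h, hU, hV⟩ := hF.hat_cores hM
    exact ⟨V, U, f, g, h, hU, n, hV⟩

end LeftFrobenius

/-- For a left Frobenius pair `(X, W)`, `(X, Ŵ)` is a cotorsion pair on the
extension-closed subcategory `Thick(X) = X̂` of `C`. -/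
theorem statement7 {C : Type u} [Category.{v} C] [Abelian C]
    [EnoughProjectives C] [EnoughInjectives C] [HasExt.{w} C]
    (X W : C → Prop) (hF : LeftFrobenius X W) :
    CotorsionPairOn (HatAll X) X (HatAll W) ∧ (∀ M, thickClosure X M ↔ HatAll X M) := by
  refine ⟨hF.cotorsionPairOn, fun M => ⟨fun h => h _ hF.isThickSub_hatAll fun N hN => ⟨0, hN⟩, ?_⟩⟩
  rintro ⟨n, hn⟩ T hT hXT
  induction n generalizing M with
  | zero => exact hXT M hn
  | succ n ih =>
    obtain ⟨K, E, f, g, hs, hE, hK⟩ := hn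
    exact (hT.2 f g hs).1 (ih K hK) (hXT E hE)

end FrobeniusPaper
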